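/- Let G be a finite 3-group which is semi-3-abelian and generated by two elements. Then Ω₁(G) ≤ Z₃(G), the third term of the upper central series of G. -/

import Mathlib

/-- In a ring of characteristic three, if `α`, `β`, `α * β` and `α⁻¹ * β` are unipotent of class
two (where `α⁻¹ = 2 - α`), then `(1 - α) * (1 - β) * (1 - α) = 0`. -/
theorem unipotent_triple_product_eq_zero {R : Type*} [Ring R] (h3 : (3 : R) = 0) {α β : R}
    (hα : (1 - α) * (1 - α) = 0) (hβ : (1 - β) * (1 - β) = 0)
    (hαβ : (1 - α * β) * (1 - α * β) = 0)
    (hαβ' : (1 - (2 - α) * β) * (1 - (2 - α) * β) = 0) :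
    (1 - α) * (1 - β) * (1 - α) = 0 := by
  obtain ⟨u, rfl⟩ : ∃ u, α = 1 - u := ⟨1 - α, by abel⟩
  obtain ⟨v, rfl⟩ : ∃ v, β = 1 - v := ⟨1 - β, by abel⟩
  simp only [sub_sub_cancel] at *
  have e1 : u * v + v * u - u * v * u - v * u * v + u * v * u * v = 0 := by
    have : (1 - (1 - u) * (1 - v)) * (1 - (1 - u) * (1 - v)) =
        u * u + v * v - u * u * v - u * (v * v)
          + (u * v + v * u - u * v * u - v * u * v + u * v * u * v) := by noncomm_ring
    rw [hαβ, hα, hβ] at this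
    simpa using this.symm
  have e2 : -(u * v) - v * u - u * v * u + v * u * v + u * v * u * v = 0 := by
    have : (1 - (2 - (1 - u)) * (1 - v)) * (1 - (2 - (1 - u)) * (1 - v)) =
        u * u + v * v - u * u * v + u * (v * v)
          + (-(u * v) - v * u - u * v * u + v * u * v + u * v * u * v) := by
      rw [show (2 : R) = 1 + 1 by norm_num]
      noncomm_ring
    rw [hαβ', hα, hβ] at this
    simpa using this.symm
  have e3 : u * v * u - u * v * u * v = 0 := by
    have : u * v * u - u * v * u * v = 3 * (u * v * u - u * v * u * v)
        + ((u * v + v * u - u * v * u - v * u * v + u * v * u * v)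
        + (-(u * v) - v * u - u * v * u + v * u * v + u * v * u * v)) := by noncomm_ring
    rw [this, e1, e2, h3]
    simp
  calc u * v * u = (u * v * u - u * v * u * v) * (1 + v) + u * v * u * (v * v) := by noncomm_ring
    _ = 0 := by rw [e3, hβ]; simp

/-- If `1 + g + g ^ 2` vanishes for all `g` in a representation over a ring of characteristic three,
then so does `(1 - a) * (1 - b) * (1 - a)` for all `a` and `b`. -/
theorem MonoidHom.triple_product_eq_zero {G R : Type*} [Group G] [Ring R] (h3 : (3 : R) = 0)
    (ρ : G →* R) (hsum : ∀ g, 1 + ρ g + ρ g * ρ g = 0) (a b : G) :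
    (1 - ρ a) * (1 - ρ b) * (1 - ρ a) = 0 := by
  have hsq (g : G) : (1 - ρ g) * (1 - ρ g) = 0 := by
    calc (1 - ρ g) * (1 - ρ g) = 1 + ρ g + ρ g * ρ g - 3 * ρ g := by noncomm_ring
      _ = 0 := by rw [hsum, h3]; simp
  have hinv (g : G) : ρ g⁻¹ = 2 - ρ g := by
    have e : ρ g⁻¹ * ρ g = 1 := by rw [← map_mul]; simp
    calc ρ g⁻¹ = ρ g⁻¹ * ((1 - ρ g) * (1 - ρ g)) + 2 * (ρ g⁻¹ * ρ g)
          - ρ g⁻¹ * ρ g * ρ g := by noncomm_ring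
      _ = 2 - ρ g := by rw [hsq, e]; simp
  exact unipotent_triple_product_eq_zero h3 (hsq a) (hsq b)
    (by rw [← map_mul]; exact hsq _) (by rw [← hinv, ← map_mul]; exact hsq _)

/-- If `y * g y * g (g y) = 1` for all `g` and `y` in an action of a group on an abelian group of
exponent three, then `(1 - a) (1 - b) (1 - a)` acts trivially for all `a` and `b`. -/
theorem div_triple_eq_one {G A : Type*} [Group G] [CommGroup A] (φ : G →* MulAut A)
    (h3 : ∀ y : A, y ^ 3 = 1) (h : ∀ (g : G) (y : A), y * φ g y * φ g (φ g y) = 1) (a b : G)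
    (y : A) :
    (y / φ a y / φ b (y / φ a y)) / φ a (y / φ a y / φ b (y / φ a y)) = 1 := by
  let ρ : G →* AddMonoid.End (Additive A) :=
    { toFun := fun g => MonoidHom.toAdditive (φ g).toMonoidHom
      map_one' := by rw [map_one]; rfl
      map_mul' := fun g k => by rw [map_mul]; rfl }
  have e3 : (3 : AddMonoid.End (Additive A)) = 0 := by
    rw [show (3 : AddMonoid.End (Additive A)) = 1 + 1 + 1 by norm_num]
    refine AddMonoidHom.ext fun y => ?_
    have := h3 y.toMul
    rw [pow_succ, pow_two] at this
    exact this
  have key := MonoidHom.triple_product_eq_zero e3 ρ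
    (fun g => AddMonoidHom.ext fun y => h g y.toMul) a b
  rw [mul_assoc] at key
  exact DFunLike.congr_fun key (Additive.ofMul y)

open scoped commutatorElement IsMulCommutative

section SemiAbelian

variable {G : Type*} [Group G]

theorem mul_conj_mul_conj_eq_one (hsemi : ∀ a b : G, (a * b) ^ 3 = 1 ↔ a ^ 3 * b ^ 3 = 1)
    {y : G} (hy : y ^ 3 = 1) (g : G) :
    y * (g * y * g⁻¹) * (g * (g * y * g⁻¹) * g⁻¹) = 1 := by
  have h : (g * y) ^ 3 * g⁻¹ ^ 3 = 1 := by
    rw [← hsemi, conj_pow, hy]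
    simp
  calc y * (g * y * g⁻¹) * (g * (g * y * g⁻¹) * g⁻¹)
      = g⁻¹ * ((g * y) ^ 3 * g⁻¹ ^ 3) * g := by simp only [pow_succ, pow_zero]; group
    _ = 1 := by rw [h]; simp

theorem commute_conj (hsemi : ∀ a b : G, (a * b) ^ 3 = 1 ↔ a ^ 3 * b ^ 3 = 1)
    {y : G} (hy : y ^ 3 = 1) (g : G) : Commute y (g * y * g⁻¹) := by
  have h1 := mul_conj_mul_conj_eq_one hsemi hy g
  have h2 : (g * (g * y * g⁻¹) * g⁻¹) * (g * y * g⁻¹) * y = 1 := by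
    calc (g * (g * y * g⁻¹) * g⁻¹) * (g * y * g⁻¹) * y
        = g * g * (y * (g⁻¹ * y * g⁻¹⁻¹) * (g⁻¹ * (g⁻¹ * y * g⁻¹⁻¹) * g⁻¹⁻¹)) * (g * g)⁻¹ := by
          group
      _ = 1 := by rw [mul_conj_mul_conj_eq_one hsemi hy g⁻¹]; simp
  rw [mul_assoc] at h2
  exact (eq_inv_of_mul_eq_one_left h1).trans (eq_inv_of_mul_eq_one_right h2).symm

theorem closure_cube_eq_one (hsemi : ∀ a b : G, (a * b) ^ 3 = 1 ↔ a ^ 3 * b ^ 3 = 1)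
    {y : G} (hy : y ∈ Subgroup.closure {g : G | g ^ 3 = 1}) : y ^ 3 = 1 := by
  induction hy using Subgroup.closure_induction with
  | mem x hx => exact hx
  | one => simp
  | mul x y _ _ hx hy => rw [hsemi, hx, hy, one_mul]
  | inv x _ hx => rw [inv_pow, hx, inv_one]

theorem commutator_triple_eq_one (hsemi : ∀ a b : G, (a * b) ^ 3 = 1 ↔ a ^ 3 * b ^ 3 = 1)
    {x : G} (hx : x ^ 3 = 1) (a b : G) : ⁅⁅⁅x, a⁆, b⁆, a⁆ = 1 := by
  let N := Subgroup.normalClosure {x}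
  have hN3 (y : G) (hy : y ∈ N) : y ^ 3 = 1 := by
    refine closure_cube_eq_one hsemi (Subgroup.closure_mono ?_ hy)
    intro z hz
    obtain ⟨w, rfl, hw⟩ := Group.mem_conjugatesOfSet_iff.1 hz
    obtain ⟨g, rfl⟩ := isConj_iff.1 hw
    simp [conj_pow, hx]
  have hcomm : IsMulCommutative N := by
    refine Subgroup.isMulCommutative_closure ?_
    intro z hz w hw
    have hzN : z ∈ N := Subgroup.subset_closure hz
    obtain ⟨_, rfl, hxz⟩ := Group.mem_conjugatesOfSet_iff.1 hz
    obtain ⟨_, rfl, hxw⟩ := Group.mem_conjugatesOfSet_iff.1 hw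
    obtain ⟨g, rfl⟩ := isConj_iff.1 (hxz.symm.trans hxw)
    exact commute_conj hsemi (hN3 z hzN) g
  have hxN : x ∈ N := Subgroup.subset_normalClosure rfl
  have key := div_triple_eq_one (MulAut.conjNormal (H := N))
    (fun y => Subtype.ext (hN3 y y.2))
    (fun g y => Subtype.ext (by simpa using mul_conj_mul_conj_eq_one hsemi (hN3 y y.2) g))
    a b ⟨x, hxN⟩
  have key' := congrArg Subtype.val key
  simp only [Subgroup.coe_div, MulAut.conjNormal_apply, Subgroup.coe_one] at key'
  rw [← key']
  simp only [commutatorElement_def, div_eq_mul_inv]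
  group

theorem commutator_self_eq_one (hsemi : ∀ a b : G, (a * b) ^ 3 = 1 ↔ a ^ 3 * b ^ 3 = 1)
    {x : G} (hx : x ^ 3 = 1) (a : G) : ⁅⁅x, a⁆, a⁆ = 1 := by
  have hc := commute_conj hsemi hx a
  have h := mul_conj_mul_conj_eq_one hsemi hx a
  have hz : (a * x * a⁻¹) ^ 3 = 1 := by simp [conj_pow, hx]
  have e : ⁅⁅x, a⁆, a⁆ = x * (a * x * a⁻¹)⁻¹ * (a * (a * x * a⁻¹) * a⁻¹) * (a * x * a⁻¹)⁻¹ := by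
    simp only [commutatorElement_def]; group
  rw [e, eq_inv_of_mul_eq_one_right h]
  generalize a * x * a⁻¹ = z at *
  calc x * z⁻¹ * (x * z)⁻¹ * z⁻¹ = x * (z⁻¹ ^ 2) * x⁻¹ * z⁻¹ := by group
    _ = (z ^ 3)⁻¹ := by rw [(hc.inv_right.pow_right 2).eq]; group
    _ = 1 := by rw [hz, inv_one]

theorem mem_upperCentralSeries_succ_of_generators {a b : G}
    (hgen : Subgroup.closure {a, b} = ⊤) {n : ℕ} {x : G}
    (ha : ⁅x, a⁆ ∈ Subgroup.upperCentralSeries G n)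
    (hb : ⁅x, b⁆ ∈ Subgroup.upperCentralSeries G n) :
    x ∈ Subgroup.upperCentralSeries G (n + 1) := by
  rw [Subgroup.mem_upperCentralSeries_succ_iff]
  intro y
  have hy : y ∈ Subgroup.closure {a, b} := hgen ▸ Subgroup.mem_top y
  induction hy using Subgroup.closure_induction with
  | mem y hy =>
    obtain rfl | rfl := hy
    exacts [ha, hb]
  | one => simp
  | mul y z _ _ hy hz =>
    rw [show ⁅x, y * z⁆ = ⁅x, y⁆ * (y * ⁅x, z⁆ * y⁻¹) by simp only [commutatorElement_def]; group]
    exact mul_mem hy (Subgroup.Normal.conj_mem inferInstance _ hz y)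
  | inv y _ hy =>
    rw [show ⁅x, y⁻¹⁆ = y⁻¹ * ⁅x, y⁆⁻¹ * y⁻¹⁻¹ by simp only [commutatorElement_def]; group]
    exact Subgroup.Normal.conj_mem inferInstance _ (inv_mem hy) y⁻¹

theorem commutator_cube_eq_one (hsemi : ∀ a b : G, (a * b) ^ 3 = 1 ↔ a ^ 3 * b ^ 3 = 1)
    {x : G} (hx : x ^ 3 = 1) (a : G) : ⁅x, a⁆ ^ 3 = 1 := by
  rw [show ⁅x, a⁆ = x * (a * x⁻¹ * a⁻¹) by simp only [commutatorElement_def]; group, hsemi]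
  simp [conj_pow, hx]

end SemiAbelian

/-- In a finite semi-3-abelian 3-group generated by two elements,
`Ω₁(G) ≤ Z₃(G)` (the third term of the upper central series). -/
theorem semi3abelian_two_gen_omega1_le_Z3 (G : Type*) [Group G] [Finite G]
    (hG : IsPGroup 3 G)
    (hsemi : ∀ a b : G, (a * b) ^ 3 = 1 ↔ a ^ 3 * b ^ 3 = 1)
    (hgen : ∃ a b : G, Subgroup.closure {a, b} = ⊤) :
    Subgroup.closure {g : G | g ^ 3 = 1} ≤ upperCentralSeries G 3 := by
  obtain ⟨a, b, hab⟩ := hgen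
  intro x hx
  have hx3 := closure_cube_eq_one hsemi hx
  have self_mem {y : G} (hy : y ^ 3 = 1) (c : G) (n : ℕ) :
      ⁅⁅y, c⁆, c⁆ ∈ Subgroup.upperCentralSeries G n := by
    rw [commutator_self_eq_one hsemi hy]; exact one_mem _
  have triple_mem (c d : G) : ⁅⁅⁅x, c⁆, d⁆, c⁆ ∈ Subgroup.upperCentralSeries G 0 := by
    rw [commutator_triple_eq_one hsemi hx3]; exact one_mem _
  have hxa := commutator_cube_eq_one hsemi hx3 a
  have hxb := commutator_cube_eq_one hsemi hx3 b
  exact mem_upperCentralSeries_succ_of_generators hab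
    (mem_upperCentralSeries_succ_of_generators hab (self_mem hx3 a 1)
      (mem_upperCentralSeries_succ_of_generators hab (triple_mem a b) (self_mem hxa b 0)))
    (mem_upperCentralSeries_succ_of_generators hab
      (mem_upperCentralSeries_succ_of_generators hab (self_mem hxb a 0) (triple_mem b a))
      (self_mem hx3 b 1))
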